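/- Let f = z² + y³ − (x₁ − x₂)yz + x₁⁵x₂ + x₁x₂⁵ and let φ̄ : ℂ[x₁, x₂, y, z]/(f) → ℂ[a₁, b₁] × ℂ[a₂, b₂] be the ℂ-algebra homomorphism induced by x₁ ↦ (0, b₂ − a₂), x₂ ↦ (b₁ − a₁, 0), y ↦ (−a₁b₁, −a₂b₂), z ↦ (−a₁²b₁, a₂²b₂). Let R ⊆ ℂ[a₁, b₁] × ℂ[a₂, b₂] be the ℂ-subalgebra generated by u = (a₁, a₂) and v = (b₁, a₂ − b₂). Then the preimage φ̄⁻¹(R) is exactly the ℂ-subalgebra of ℂ[x₁, x₂, y, z]/(f) generated by the residue classes of the thirteen polynomials x₁² + x₂² − y, x₁x₂, x₁y + x₂y, x₁³ − x₂³ + 3x₂y + z, x₁x₂², x₁²x₂, x₁z − x₂z, x₁²y − x₂²y − x₂z, x₁x₂y, x₁x₂³, x₂y² − x₁²z, x₁y² + x₂²z, x₁x₂z. -/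

import Mathlib

/-! Every generator maps to an explicit polynomial in `u` and `v`, so the generated algebra lies in
the preimage of `R`. For the converse let `B ⊆ ℂ[x₁,x₂,y,z]` be the preimage of the generated algebra
under the quotient map.

The ring `ℂ[x₁,x₂,y,z]` is generated as a `B`-module by `1, x₁, x₂, y, x₂², z`, and `x₁x₂` times each
of these lies in `B`; hence `B` contains the ideal `(x₁x₂)` (`X0X1_mul_mem`). This ideal together with
`f` is the kernel of the residue map (`exists_of_resPhi_eq_zero`): modulo `f` an element has the form
`α + βz` with `α, β ∈ ℂ[x₁,x₂,y]`, and on each component `1, z` are linearly independent over the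
functions of `b - a` and `ab`, by the involution `(a, b) ↦ (-b, -a)`.

Since `R` is the graph of `p(a, b) ↦ p(a, a - b)`, an element of `R` is determined by its first
component `p`. If it is the image of `g`, then `p(0, t) = p(-t, 0) = p(t, t)`, all being
values of `g` on the `x₁`- and `x₂`-axes. The common polynomial in `t` has no linear term,
hence is a polynomial in `t²` and `t³`, and these are up to sign the restrictions of the images of
`x₁² + x₂² - y` and `x₁³ - x₂³ + 3x₂y + z`. After subtracting an element of `B`, `p` vanishes on
three lines and is divisible by `ab(a - b)`. The image of `B` contains all of `(ab(a - b))`, since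
`ℂ[a, b]` is generated over it by `1, a, b, ab, a²` (`mul_mem_map_resFst`). Subtracting a second
element of `B` leaves an element of the kernel, which lies in `B`. -/


open MvPolynomial

/-- The polynomial `f = z² + y³ − (x₁ − x₂)yz + x₁⁵x₂ + x₁x₂⁵` in `ℂ[x₁,x₂,y,z]`,
with `X 0 = x₁`, `X 1 = x₂`, `X 2 = y`, `X 3 = z`. -/
noncomputable def fDP : MvPolynomial (Fin 4) ℂ :=
  (X 3) ^ 2 + (X 2) ^ 3 - (X 0 - X 1) * X 2 * X 3 + (X 0) ^ 5 * X 1 + X 0 * (X 1) ^ 5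

/-- The residue map `φ : ℂ[x₁,x₂,y,z] → ℂ[a₁,b₁] × ℂ[a₂,b₂]`, determined by
`x₁ ↦ (0, b₂ − a₂)`, `x₂ ↦ (b₁ − a₁, 0)`, `y ↦ (−a₁b₁, −a₂b₂)`, `z ↦ (−a₁²b₁, a₂²b₂)`;
in each factor `X 0 = aᵢ` and `X 1 = bᵢ`. -/
noncomputable def resPhi :
    MvPolynomial (Fin 4) ℂ →ₐ[ℂ] MvPolynomial (Fin 2) ℂ × MvPolynomial (Fin 2) ℂ :=
  aeval ![((0 : MvPolynomial (Fin 2) ℂ), X 1 - X 0),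
          (X 1 - X 0, (0 : MvPolynomial (Fin 2) ℂ)),
          (-(X 0 * X 1), -(X 0 * X 1)),
          (-((X 0) ^ 2 * X 1), (X 0) ^ 2 * X 1)]

/-- `u = (a₁, a₂)`. -/
noncomputable def uInv : MvPolynomial (Fin 2) ℂ × MvPolynomial (Fin 2) ℂ := (X 0, X 0)

/-- `v = (b₁, a₂ − b₂)`. -/
noncomputable def vInv : MvPolynomial (Fin 2) ℂ × MvPolynomial (Fin 2) ℂ := (X 1, X 0 - X 1)

/-- The thirteen generators of the canonical ring, as polynomials in
`ℂ[x₁,x₂,y,z]` with `X 0 = x₁`, `X 1 = x₂`, `X 2 = y`, `X 3 = z`. -/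
noncomputable def canGens : Set (MvPolynomial (Fin 4) ℂ) :=
  { (X 0) ^ 2 + (X 1) ^ 2 - X 2,
    X 0 * X 1,
    X 0 * X 2 + X 1 * X 2,
    (X 0) ^ 3 - (X 1) ^ 3 + 3 * (X 1 * X 2) + X 3,
    X 0 * (X 1) ^ 2,
    (X 0) ^ 2 * X 1,
    X 0 * X 3 - X 1 * X 3,
    (X 0) ^ 2 * X 2 - (X 1) ^ 2 * X 2 - X 1 * X 3,
    X 0 * X 1 * X 2,
    X 0 * (X 1) ^ 3,
    X 1 * (X 2) ^ 2 - (X 0) ^ 2 * X 3,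
    X 0 * (X 2) ^ 2 + (X 1) ^ 2 * X 3,
    X 0 * X 1 * X 3 }

/-! ### Generalities on polynomial rings -/

/-- If every variable is congruent to `e i` modulo `d`, then every polynomial `p` is congruent to
`p(e)` modulo `d`. -/
lemma dvd_sub_aeval {σ : Type*} (d : MvPolynomial σ ℂ) (e : σ → MvPolynomial σ ℂ)
    (h : ∀ i, d ∣ X i - e i) (p : MvPolynomial σ ℂ) : d ∣ p - aeval e p := by
  induction p using MvPolynomial.induction_on with
  | C c => simp [algebraMap_eq]
  | add p q hp hq =>
    have := dvd_add hp hq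
    rw [map_add]
    convert this using 1
    ring
  | mul_X p i hp =>
    have := dvd_add (hp.mul_right (X i)) ((h i).mul_left (aeval e p))
    rw [map_mul, aeval_X]
    convert this using 1
    ring

lemma span_eq_top_of_X_mul {σ : Type*} (B : Subalgebra ℂ (MvPolynomial σ ℂ))
    (s : Set (MvPolynomial σ ℂ)) (h1 : (1 : MvPolynomial σ ℂ) ∈ Submodule.span B s)
    (hX : ∀ i, ∀ m ∈ s, X i * m ∈ Submodule.span B s) (p : MvPolynomial σ ℂ) :
    p ∈ Submodule.span B s := by
  induction p using MvPolynomial.induction_on with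
  | C c =>
    have := (Submodule.span B s).smul_mem (algebraMap ℂ B c) h1
    rw [Subalgebra.smul_def, smul_eq_mul, mul_one] at this
    exact this
  | add p q hp hq => exact add_mem hp hq
  | mul_X p i hp =>
    rw [mul_comm]
    induction hp using Submodule.span_induction with
    | mem x hx => exact hX i x hx
    | zero => simp
    | add x y _ _ hx hy => rw [mul_add]; exact add_mem hx hy
    | smul a x _ hx => rw [mul_smul_comm]; exact Submodule.smul_mem _ _ hx

/-- A conductor criterion: if the `B`-module spanned by `s` contains `1` and is stable under the
variables, hence is the whole ring, and `d` multiplies `s` into `B`, then `d` multiplies the whole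
ring into `B`. -/
lemma mul_mem_of_span {σ : Type*} (B : Subalgebra ℂ (MvPolynomial σ ℂ))
    (s : Set (MvPolynomial σ ℂ)) (h1 : (1 : MvPolynomial σ ℂ) ∈ Submodule.span B s)
    (hX : ∀ i, ∀ m ∈ s, X i * m ∈ Submodule.span B s)
    (d : MvPolynomial σ ℂ) (hd : ∀ m ∈ s, d * m ∈ B) (p : MvPolynomial σ ℂ) :
    d * p ∈ B := by
  induction span_eq_top_of_X_mul B s h1 hX p using Submodule.span_induction with
  | mem x hx => exact hd x hx
  | zero => simp
  | add x y _ _ hx hy => rw [mul_add]; exact add_mem hx hy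
  | smul a x _ hx =>
    rw [mul_smul_comm, Subalgebra.smul_def, smul_eq_mul]
    exact mul_mem a.2 hx

/-! ### The conductor ideal `(x₁x₂)` -/

/-- Any subalgebra containing the thirteen generators contains the ideal `(x₁x₂)`, because
`1, x₁, x₂, y, x₂², z` generate the polynomial ring as a module over it. -/
lemma X0X1_mul_mem (B : Subalgebra ℂ (MvPolynomial (Fin 4) ℂ)) (hB : canGens ⊆ (B : Set (MvPolynomial (Fin 4) ℂ)))
    (p : MvPolynomial (Fin 4) ℂ) : X 0 * X 1 * p ∈ B := by
  set s : Set (MvPolynomial (Fin 4) ℂ) := {1, X 0, X 1, X 2, X 1 ^ 2, X 3} with hs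
  set M := Submodule.span B s with hM
  have hmul : ∀ b ∈ B, ∀ m ∈ M, b * m ∈ M := fun b hb m hm => M.smul_mem ⟨b, hb⟩ hm
  have g1 : (X 0) ^ 2 + (X 1) ^ 2 - X 2 ∈ B := hB (by simp [canGens])
  have g2 : X 0 * X 1 ∈ B := hB (by simp [canGens])
  have g3 : X 0 * X 2 + X 1 * X 2 ∈ B := hB (by simp [canGens])
  have g4 : (X 0) ^ 3 - (X 1) ^ 3 + 3 * (X 1 * X 2) + X 3 ∈ B := hB (by simp [canGens])
  have g5 : X 0 * (X 1) ^ 2 ∈ B := hB (by simp [canGens])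
  have g6 : (X 0) ^ 2 * X 1 ∈ B := hB (by simp [canGens])
  have g7 : X 0 * X 3 - X 1 * X 3 ∈ B := hB (by simp [canGens])
  have g8 : (X 0) ^ 2 * X 2 - (X 1) ^ 2 * X 2 - X 1 * X 3 ∈ B := hB (by simp [canGens])
  have g9 : X 0 * X 1 * X 2 ∈ B := hB (by simp [canGens])
  have g10 : X 0 * (X 1) ^ 3 ∈ B := hB (by simp [canGens])
  have g13 : X 0 * X 1 * X 3 ∈ B := hB (by simp [canGens])
  have m1 : (1 : MvPolynomial (Fin 4) ℂ) ∈ M := Submodule.subset_span (by simp [hs])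
  have mx : (X 0 : MvPolynomial (Fin 4) ℂ) ∈ M := Submodule.subset_span (by simp [hs])
  have mw : (X 1 : MvPolynomial (Fin 4) ℂ) ∈ M := Submodule.subset_span (by simp [hs])
  have my : (X 2 : MvPolynomial (Fin 4) ℂ) ∈ M := Submodule.subset_span (by simp [hs])
  have mww : (X 1 ^ 2 : MvPolynomial (Fin 4) ℂ) ∈ M := Submodule.subset_span (by simp [hs])
  have mz : (X 3 : MvPolynomial (Fin 4) ℂ) ∈ M := Submodule.subset_span (by simp [hs])
  have hBM : ∀ b ∈ B, b ∈ M := fun b hb => by simpa using hmul b hb 1 m1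
  have mxx : (X 0 ^ 2 : MvPolynomial (Fin 4) ℂ) ∈ M := by
    convert add_mem (sub_mem (hBM _ g1) mww) my using 1; ring
  -- Modulo multiples of `x₁x₂`, the element `x₂y` equals `g₄ - z - x₁g₁ + x₂g₁ - g₃`.
  have mwy : (X 1 * X 2 : MvPolynomial (Fin 4) ℂ) ∈ M := by
    convert sub_mem (add_mem (sub_mem (add_mem (sub_mem (sub_mem (hBM _ g4) mz)
      (hmul _ g1 _ mx)) (hmul _ g1 _ mw)) (hBM _ g3)) (hBM _ g5)) (hBM _ g6) using 1
    ring
  have mxy : (X 0 * X 2 : MvPolynomial (Fin 4) ℂ) ∈ M := by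
    convert sub_mem (hBM _ g3) mwy using 1; ring
  have mwww : (X 1 ^ 3 : MvPolynomial (Fin 4) ℂ) ∈ M := by
    convert sub_mem (add_mem (hmul _ g1 _ mw) mwy) (hBM _ g6) using 1; ring
  have mxxy : (X 0 ^ 2 * X 2 : MvPolynomial (Fin 4) ℂ) ∈ M := by
    convert sub_mem (hmul _ g3 _ mx) (hBM _ g9) using 1; ring
  have mwwy : (X 1 ^ 2 * X 2 : MvPolynomial (Fin 4) ℂ) ∈ M := by
    convert sub_mem (hmul _ g3 _ mw) (hBM _ g9) using 1; ring
  have mwz : (X 1 * X 3 : MvPolynomial (Fin 4) ℂ) ∈ M := by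
    convert sub_mem (sub_mem mxxy mwwy) (hBM _ g8) using 1; ring
  have mxz : (X 0 * X 3 : MvPolynomial (Fin 4) ℂ) ∈ M := by
    convert add_mem (hBM _ g7) mwz using 1; ring
  have myy : (X 2 ^ 2 : MvPolynomial (Fin 4) ℂ) ∈ M := by
    convert sub_mem (add_mem mxxy mwwy) (hmul _ g1 _ my) using 1; ring
  have mxxz : (X 0 ^ 2 * X 3 : MvPolynomial (Fin 4) ℂ) ∈ M := by
    convert add_mem (hmul _ g7 _ mx) (hBM _ g13) using 1; ring
  have mwwz : (X 1 ^ 2 * X 3 : MvPolynomial (Fin 4) ℂ) ∈ M := by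
    convert sub_mem (hBM _ g13) (hmul _ g7 _ mw) using 1; ring
  have myz : (X 2 * X 3 : MvPolynomial (Fin 4) ℂ) ∈ M := by
    convert sub_mem (add_mem mxxz mwwz) (hmul _ g1 _ mz) using 1; ring
  -- The products `x₁yz` and `x₂yz` are accessible through their sum and difference.
  have mwyz2 : (2 * (X 1 * X 2 * X 3) : MvPolynomial (Fin 4) ℂ) ∈ M := by
    convert sub_mem (hmul _ g3 _ mz) (hmul _ g7 _ my) using 1; ring
  have mwyz : (X 1 * X 2 * X 3 : MvPolynomial (Fin 4) ℂ) ∈ M := by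
    convert hmul _ (B.algebraMap_mem (1 / 2)) _ mwyz2 using 1
    have h2 : algebraMap ℂ (MvPolynomial (Fin 4) ℂ) (1 / 2) * 2 = 1 := by
      rw [← map_ofNat (algebraMap ℂ (MvPolynomial (Fin 4) ℂ)) 2, ← map_mul]
      norm_num
    linear_combination -(X 1 * X 2 * X 3) * h2
  have mzz : (X 3 ^ 2 : MvPolynomial (Fin 4) ℂ) ∈ M := by
    convert sub_mem (sub_mem (add_mem (add_mem (sub_mem (hmul _ g4 _ mz) (hmul _ g1 _ mxz))
      (hmul _ g2 _ mwz)) (hmul _ g1 _ mwz)) (hmul _ g2 _ mxz))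
      (add_mem (hmul _ g3 _ mz) mwyz) using 1
    ring
  refine mul_mem_of_span B s m1 ?_ _ ?_ p
  · intro i m hm
    simp only [hs, Set.mem_insert_iff, Set.mem_singleton_iff] at hm
    fin_cases i <;> simp only [Fin.zero_eta, Fin.mk_one, Fin.reduceFinMk]
    · rcases hm with rfl | rfl | rfl | rfl | rfl | rfl
      · simpa using mx
      · rw [← pow_two]; exact mxx
      · exact hBM _ g2
      · exact mxy
      · exact hBM _ g5
      · exact mxz
    · rcases hm with rfl | rfl | rfl | rfl | rfl | rfl
      · simpa using mw
      · rw [mul_comm]; exact hBM _ g2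
      · rw [← pow_two]; exact mww
      · exact mwy
      · rw [← pow_succ']; exact mwww
      · exact mwz
    · rcases hm with rfl | rfl | rfl | rfl | rfl | rfl
      · simpa using my
      · rw [mul_comm]; exact mxy
      · rw [mul_comm]; exact mwy
      · rw [← pow_two]; exact myy
      · rw [mul_comm]; exact mwwy
      · exact myz
    · rcases hm with rfl | rfl | rfl | rfl | rfl | rfl
      · simpa using mz
      · rw [mul_comm]; exact mxz
      · rw [mul_comm]; exact mwz
      · rw [mul_comm]; exact myz
      · rw [mul_comm]; exact mwwz
      · rw [← pow_two]; exact mzz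
  · intro m hm
    simp only [hs, Set.mem_insert_iff, Set.mem_singleton_iff] at hm
    rcases hm with rfl | rfl | rfl | rfl | rfl | rfl
    · simpa using g2
    · convert g6 using 1; ring
    · convert g5 using 1; ring
    · exact g9
    · convert g10 using 1; ring
    · exact g13

/-! ### The residue map and the subalgebra `R` -/

/-- The first component `ℂ[x₁,x₂,y,z] → ℂ[a₁,b₁]` of the residue map. -/
noncomputable def resFst : MvPolynomial (Fin 4) ℂ →ₐ[ℂ] MvPolynomial (Fin 2) ℂ :=
  (AlgHom.fst ℂ _ _).comp resPhi

lemma resFst_apply (g : MvPolynomial (Fin 4) ℂ) : resFst g = (resPhi g).1 := rfl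

lemma eval_resPhi_fst (g : MvPolynomial (Fin 4) ℂ) (a b : ℂ) :
    eval ![a, b] (resPhi g).1 = eval ![0, b - a, -(a * b), -(a ^ 2 * b)] g := by
  have : ((aeval ![a, b] : _ →ₐ[ℂ] ℂ).comp ((AlgHom.fst ℂ _ _).comp resPhi))
      = aeval ![0, b - a, -(a * b), -(a ^ 2 * b)] := by
    apply MvPolynomial.algHom_ext
    intro i
    fin_cases i <;> simp [resPhi]
  simpa [aeval_eq_eval] using congrArg (fun k => k g) this

lemma eval_resPhi_snd (g : MvPolynomial (Fin 4) ℂ) (a b : ℂ) :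
    eval ![a, b] (resPhi g).2 = eval ![b - a, 0, -(a * b), a ^ 2 * b] g := by
  have : ((aeval ![a, b] : _ →ₐ[ℂ] ℂ).comp ((AlgHom.snd ℂ _ _).comp resPhi))
      = aeval ![b - a, 0, -(a * b), a ^ 2 * b] := by
    apply MvPolynomial.algHom_ext
    intro i
    fin_cases i <;> simp [resPhi]
  simpa [aeval_eq_eval] using congrArg (fun k => k g) this

/-- The subalgebra `R = ℂ[u, v]` is contained in the graph of `p(a, b) ↦ p(a, a - b)`. -/
lemma eq_of_mem_adjoin (w : MvPolynomial (Fin 2) ℂ × MvPolynomial (Fin 2) ℂ)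
    (hw : w ∈ Algebra.adjoin ℂ ({uInv, vInv} :
      Set (MvPolynomial (Fin 2) ℂ × MvPolynomial (Fin 2) ℂ))) :
    w.2 = aeval ![X 0, X 0 - X 1] w.1 := by
  have : Algebra.adjoin ℂ ({uInv, vInv} :
      Set (MvPolynomial (Fin 2) ℂ × MvPolynomial (Fin 2) ℂ)) ≤
      AlgHom.equalizer (AlgHom.snd ℂ _ _)
        ((aeval ![X 0, X 0 - X 1] : MvPolynomial (Fin 2) ℂ →ₐ[ℂ] _).comp
          (AlgHom.fst ℂ _ _)) := by
    rw [Algebra.adjoin_le_iff]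
    rintro x (rfl | rfl) <;> simp [uInv, vInv]
  exact this hw

lemma eval_of_mem_adjoin (w : MvPolynomial (Fin 2) ℂ × MvPolynomial (Fin 2) ℂ)
    (hw : w ∈ Algebra.adjoin ℂ ({uInv, vInv} :
      Set (MvPolynomial (Fin 2) ℂ × MvPolynomial (Fin 2) ℂ))) (a b : ℂ) :
    eval ![a, b] w.2 = eval ![a, a - b] w.1 := by
  rw [eq_of_mem_adjoin w hw]
  have : ((aeval ![a, b] : _ →ₐ[ℂ] ℂ).comp
      (aeval ![X 0, X 0 - X 1] : MvPolynomial (Fin 2) ℂ →ₐ[ℂ] MvPolynomial (Fin 2) ℂ))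
      = aeval ![a, a - b] := by
    apply MvPolynomial.algHom_ext
    intro i
    fin_cases i <;> simp
  simpa [aeval_eq_eval] using congrArg (fun k => k w.1) this

lemma resPhi_mem_of_mem_canGens (g : MvPolynomial (Fin 4) ℂ) (hg : g ∈ canGens) :
    resPhi g ∈ Algebra.adjoin ℂ ({uInv, vInv} :
      Set (MvPolynomial (Fin 2) ℂ × MvPolynomial (Fin 2) ℂ)) := by
  set R := Algebra.adjoin ℂ ({uInv, vInv} :
      Set (MvPolynomial (Fin 2) ℂ × MvPolynomial (Fin 2) ℂ)) with hR
  have hu : uInv ∈ R := Algebra.subset_adjoin (by simp)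
  have hv : vInv ∈ R := Algebra.subset_adjoin (by simp)
  have huv := sub_mem hu hv
  have hd : uInv * vInv * (uInv - vInv) ∈ R := mul_mem (mul_mem hu hv) huv
  simp only [canGens, Set.mem_insert_iff, Set.mem_singleton_iff] at hg
  rcases hg with rfl | rfl | rfl | rfl | rfl | rfl | rfl | rfl | rfl | rfl | rfl | rfl | rfl
  · convert add_mem (sub_mem (pow_mem hu 2) (mul_mem hu hv)) (pow_mem hv 2) using 1
    ext1 <;> simp [resPhi, uInv, vInv] <;> ring
  · convert zero_mem R using 1
    ext1 <;> simp [resPhi]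
  · convert hd using 1
    ext1 <;> simp [resPhi, uInv, vInv] <;> ring
  · convert sub_mem (sub_mem (pow_mem hu 3) (pow_mem hv 3)) (mul_mem (pow_mem hu 2) hv) using 1
    ext1 <;> simp [resPhi, uInv, vInv] <;> ring
  · convert zero_mem R using 1
    ext1 <;> simp [resPhi]
  · convert zero_mem R using 1
    ext1 <;> simp [resPhi]
  · convert neg_mem (mul_mem hd hu) using 1
    ext1 <;> simp [resPhi, uInv, vInv] <;> ring
  · convert neg_mem (mul_mem hd hv) using 1
    ext1 <;> simp [resPhi, uInv, vInv] <;> ring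
  · convert zero_mem R using 1
    ext1 <;> simp [resPhi]
  · convert zero_mem R using 1
    ext1 <;> simp [resPhi]
  · convert neg_mem (mul_mem hd (mul_mem hu hv)) using 1
    ext1 <;> simp [resPhi, uInv, vInv] <;> ring
  · convert neg_mem (mul_mem hd (mul_mem hu huv)) using 1
    ext1 <;> simp [resPhi, uInv, vInv] <;> ring
  · convert zero_mem R using 1
    ext1 <;> simp [resPhi]

/-! ### The kernel of the residue map -/

/-- `z` is monic quadratic over `ℂ[x₁,x₂,y]` modulo `f`. -/
lemma exists_normal_form (g : MvPolynomial (Fin 4) ℂ) :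
    ∃ (α β : MvPolynomial (Fin 3) ℂ) (γ : MvPolynomial (Fin 4) ℂ),
      g = rename Fin.castSucc α + rename Fin.castSucc β * X 3 + fDP * γ := by
  induction g using MvPolynomial.induction_on with
  | C c => exact ⟨C c, 0, 0, by simp⟩
  | add p q hp hq =>
    obtain ⟨α, β, γ, rfl⟩ := hp
    obtain ⟨α', β', γ', rfl⟩ := hq
    refine ⟨α + α', β + β', γ + γ', ?_⟩
    simp only [map_add]
    ring
  | mul_X p i hp =>
    obtain ⟨α, β, γ, rfl⟩ := hp
    refine Fin.lastCases ?_ (fun j => ?_) i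
    · refine ⟨-β * (X 2 ^ 3 + X 0 ^ 5 * X 1 + X 0 * X 1 ^ 5), α + β * (X 0 - X 1) * X 2,
        rename Fin.castSucc β + γ * X 3, ?_⟩
      simp only [map_add, map_mul, map_neg, map_sub, map_pow, rename_X]
      change _ * X 3 = -_ * (X 2 ^ 3 + X 0 ^ 5 * X 1 + X 0 * X 1 ^ 5) +
        (_ + _ * (X 0 - X 1) * X 2) * X 3 + _
      simp only [fDP]
      ring
    · refine ⟨α * X j, β * X j, γ * X j.castSucc, ?_⟩
      simp only [map_mul, rename_X]
      ring

/-- On the double cover `(a, b) ↦ (b - a, -ab)` with involution `(a, b) ↦ (-b, -a)`, the functions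
`1` and `c a²b` with `c ≠ 0` are linearly independent over the base. -/
lemma eq_zero_of_cover (p q : MvPolynomial (Fin 2) ℂ) (c : ℂ) (hc : c ≠ 0)
    (h : ∀ a b : ℂ, eval ![b - a, -(a * b)] p + eval ![b - a, -(a * b)] q * (c * (a ^ 2 * b)) = 0) :
    p = 0 ∧ q = 0 := by
  have hsurj : ∀ v : Fin 2 → ℂ, ∃ a b : ℂ, v = ![b - a, -(a * b)] := by
    intro v
    obtain ⟨w, hw⟩ := IsAlgClosed.exists_pow_nat_eq ((v 0) ^ 2 - 4 * v 1) (n := 2) (by norm_num)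
    refine ⟨(w - v 0) / 2, (w + v 0) / 2, ?_⟩
    ext i
    fin_cases i
    · simp; ring
    · simp; linear_combination hw / 4
  have hq : q = 0 := by
    -- The second factor is `(ab(a + b))²` written in terms of `s = b - a` and `y = -ab`.
    have h0 : q * (X 1 ^ 2 * (X 0 ^ 2 - 4 * X 1)) = 0 := by
      apply MvPolynomial.funext
      intro v
      obtain ⟨a, b, rfl⟩ := hsurj v
      have h1 := h a b
      have h2 := h (-b) (-a)
      have e1 : -a - -b = b - a := by ring
      have e2 : -(-b * -a) = -(a * b) := by ring
      rw [e1, e2] at h2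
      have h3 : eval ![b - a, -(a * b)] q * (a * b * (a + b)) = 0 := by
        apply mul_left_cancel₀ hc
        linear_combination h1 - h2
      simp
      have h4 : (b - a) ^ 2 + 4 * (a * b) = (a + b) ^ 2 := by ring
      rw [h4]
      have h5 : eval ![b - a, -(a * b)] q = 0 ∨ a * b * (a + b) = 0 := mul_eq_zero.mp h3
      simpa [or_assoc] using h5
    refine (mul_eq_zero.mp h0).resolve_right fun hD => ?_
    have := congrArg (eval ![1, 1]) hD
    norm_num at this
  refine ⟨?_, hq⟩
  apply MvPolynomial.funext
  intro v
  obtain ⟨a, b, rfl⟩ := hsurj v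
  simpa [hq] using h a b

lemma X0X1_dvd (α : MvPolynomial (Fin 3) ℂ) (h0 : ∀ s y : ℂ, eval ![0, s, y] α = 0)
    (h1 : ∀ s y : ℂ, eval ![s, 0, y] α = 0) : X 0 * X 1 ∣ α := by
  have d0 := dvd_sub_aeval (X 0) ![0, X 1, X 2]
    (by intro i; fin_cases i <;> simp) α
  have z0 : aeval (![0, X 1, X 2] : Fin 3 → MvPolynomial (Fin 3) ℂ) α = 0 := by
    apply MvPolynomial.funext
    intro v
    have : ((aeval v : _ →ₐ[ℂ] ℂ).comp
        (aeval ![0, X 1, X 2] : MvPolynomial (Fin 3) ℂ →ₐ[ℂ] MvPolynomial (Fin 3) ℂ))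
        = aeval ![0, v 1, v 2] := by
      apply MvPolynomial.algHom_ext
      intro i
      fin_cases i <;> simp
    have := congrArg (fun k => k α) this
    simpa [aeval_eq_eval, h0] using this
  rw [z0, sub_zero] at d0
  obtain ⟨β, rfl⟩ := d0
  have d1 := dvd_sub_aeval (X 1) ![X 0, 0, X 2]
    (by intro i; fin_cases i <;> simp) β
  have z1 : aeval (![X 0, 0, X 2] : Fin 3 → MvPolynomial (Fin 3) ℂ) (X 0 * β) = 0 := by
    apply MvPolynomial.funext
    intro v
    have : ((aeval v : _ →ₐ[ℂ] ℂ).comp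
        (aeval ![X 0, 0, X 2] : MvPolynomial (Fin 3) ℂ →ₐ[ℂ] MvPolynomial (Fin 3) ℂ))
        = aeval ![v 0, 0, v 2] := by
      apply MvPolynomial.algHom_ext
      intro i
      fin_cases i <;> simp
    have := congrArg (fun k => k (X 0 * β)) this
    have h2 := h1 (v 0) (v 2)
    simp only [AlgHom.comp_apply, aeval_eq_eval] at this
    simpa [h2] using this.trans h2
  have z2 : aeval (![X 0, 0, X 2] : Fin 3 → MvPolynomial (Fin 3) ℂ) β = 0 := by
    rw [map_mul, aeval_X] at z1
    exact (mul_eq_zero.mp z1).resolve_left (X_ne_zero 0)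
  rw [z2, sub_zero] at d1
  exact mul_dvd_mul_left _ d1

/-- The kernel of the residue map is the ideal `(x₁x₂, f)`. -/
lemma exists_of_resPhi_eq_zero (hf : resPhi fDP = 0) (g : MvPolynomial (Fin 4) ℂ)
    (hg : resPhi g = 0) :
    ∃ δ γ : MvPolynomial (Fin 4) ℂ, g = X 0 * X 1 * δ + fDP * γ := by
  obtain ⟨α, β, γ, rfl⟩ := exists_normal_form g
  rw [map_add, map_mul resPhi fDP, hf, zero_mul, add_zero] at hg
  have hev : ∀ (δ : MvPolynomial (Fin 3) ℂ) (p q r t : ℂ),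
      eval ![p, q, r, t] (rename Fin.castSucc δ) = eval ![p, q, r] δ := by
    intro δ p q r t
    rw [eval_rename]
    congr 2
    ext i
    fin_cases i <;> rfl
  have hc0 : ∀ (δ : MvPolynomial (Fin 3) ℂ) (s y : ℂ),
      eval ![s, y] (aeval ![0, X 0, X 1] δ : MvPolynomial (Fin 2) ℂ) = eval ![0, s, y] δ := by
    intro δ s y
    have : ((aeval ![s, y] : _ →ₐ[ℂ] ℂ).comp
        (aeval ![0, X 0, X 1] : MvPolynomial (Fin 3) ℂ →ₐ[ℂ] MvPolynomial (Fin 2) ℂ))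
        = aeval ![0, s, y] := by
      apply MvPolynomial.algHom_ext
      intro i
      fin_cases i <;> simp
    simpa [aeval_eq_eval] using congrArg (fun k => k δ) this
  have hc1 : ∀ (δ : MvPolynomial (Fin 3) ℂ) (s y : ℂ),
      eval ![s, y] (aeval ![X 0, 0, X 1] δ : MvPolynomial (Fin 2) ℂ) = eval ![s, 0, y] δ := by
    intro δ s y
    have : ((aeval ![s, y] : _ →ₐ[ℂ] ℂ).comp
        (aeval ![X 0, 0, X 1] : MvPolynomial (Fin 3) ℂ →ₐ[ℂ] MvPolynomial (Fin 2) ℂ))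
        = aeval ![s, 0, y] := by
      apply MvPolynomial.algHom_ext
      intro i
      fin_cases i <;> simp
    simpa [aeval_eq_eval] using congrArg (fun k => k δ) this
  obtain ⟨a0, b0⟩ := eq_zero_of_cover (aeval ![0, X 0, X 1] α) (aeval ![0, X 0, X 1] β) (-1)
    (by norm_num) (by
      intro a b
      have := eval_resPhi_fst (rename Fin.castSucc α + rename Fin.castSucc β * X 3) a b
      rw [hg, map_add, map_mul, hev, hev] at this
      simp only [hc0]
      simpa using this.symm)
  obtain ⟨a1, b1⟩ := eq_zero_of_cover (aeval ![X 0, 0, X 1] α) (aeval ![X 0, 0, X 1] β) 1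
    (by norm_num) (by
      intro a b
      have := eval_resPhi_snd (rename Fin.castSucc α + rename Fin.castSucc β * X 3) a b
      rw [hg, map_add, map_mul, hev, hev] at this
      simp only [hc1]
      simpa using this.symm)
  obtain ⟨α', rfl⟩ := X0X1_dvd α (fun s y => by rw [← hc0, a0, map_zero])
    (fun s y => by rw [← hc1, a1, map_zero])
  obtain ⟨β', rfl⟩ := X0X1_dvd β (fun s y => by rw [← hc0, b0, map_zero])
    (fun s y => by rw [← hc1, b1, map_zero])
  refine ⟨rename Fin.castSucc α' + rename Fin.castSucc β' * X 3, γ, ?_⟩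
  simp only [map_mul, rename_X]
  change X 0 * X 1 * _ + X 0 * X 1 * _ * _ + _ = _
  ring

/-! ### The image of the residue map inside `R` -/

/-- The ideal `(ab(a - b))` of `ℂ[a, b]` lies in the image of the subalgebra, because
`1, a, b, ab, a²` generate `ℂ[a, b]` as a module over that image. -/
lemma mul_mem_map_resFst (B : Subalgebra ℂ (MvPolynomial (Fin 4) ℂ)) (hB : canGens ⊆ (B : Set (MvPolynomial (Fin 4) ℂ)))
    (p : MvPolynomial (Fin 2) ℂ) : X 0 * X 1 * (X 0 - X 1) * p ∈ B.map resFst := by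
  set E := B.map resFst with hE
  have hmap : ∀ g ∈ canGens, resFst g ∈ E := fun g hg => ⟨g, hB hg, rfl⟩
  have g1 : X 0 ^ 2 - X 0 * X 1 + X 1 ^ 2 ∈ E := by
    convert hmap ((X 0) ^ 2 + (X 1) ^ 2 - X 2) (by simp [canGens]) using 1
    simp [resFst, resPhi]; ring
  have g3 : X 0 * X 1 * (X 0 - X 1) ∈ E := by
    convert hmap (X 0 * X 2 + X 1 * X 2) (by simp [canGens]) using 1
    simp [resFst, resPhi]; ring
  have g4 : X 0 ^ 3 - X 1 ^ 3 - X 0 ^ 2 * X 1 ∈ E := by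
    convert hmap ((X 0) ^ 3 - (X 1) ^ 3 + 3 * (X 1 * X 2) + X 3) (by simp [canGens]) using 1
    simp [resFst, resPhi]; ring
  have g7 : X 0 * X 1 * (X 0 - X 1) * X 0 ∈ E := by
    convert neg_mem (hmap (X 0 * X 3 - X 1 * X 3) (by simp [canGens])) using 1
    simp [resFst, resPhi]; ring
  have g8 : X 0 * X 1 * (X 0 - X 1) * X 1 ∈ E := by
    convert neg_mem (hmap ((X 0) ^ 2 * X 2 - (X 1) ^ 2 * X 2 - X 1 * X 3)
      (by simp [canGens])) using 1
    simp [resFst, resPhi]; ring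
  have g11 : X 0 * X 1 * (X 0 - X 1) * (X 0 * X 1) ∈ E := by
    convert neg_mem (hmap (X 1 * (X 2) ^ 2 - (X 0) ^ 2 * X 3) (by simp [canGens])) using 1
    simp [resFst, resPhi]; ring
  have g12 : X 0 * X 1 * (X 0 - X 1) * (X 0 ^ 2) ∈ E := by
    convert sub_mem g11 (hmap (X 0 * (X 2) ^ 2 + (X 1) ^ 2 * X 3) (by simp [canGens])) using 1
    simp [resFst, resPhi]; ring
  set s : Set (MvPolynomial (Fin 2) ℂ) := {1, X 0, X 1, X 0 * X 1, X 0 ^ 2} with hs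
  set M := Submodule.span E s with hM
  have hmul : ∀ b ∈ E, ∀ m ∈ M, b * m ∈ M := fun b hb m hm => M.smul_mem ⟨b, hb⟩ hm
  have m1 : (1 : MvPolynomial (Fin 2) ℂ) ∈ M := Submodule.subset_span (by simp [hs])
  have ma : (X 0 : MvPolynomial (Fin 2) ℂ) ∈ M := Submodule.subset_span (by simp [hs])
  have mb : (X 1 : MvPolynomial (Fin 2) ℂ) ∈ M := Submodule.subset_span (by simp [hs])
  have mab : (X 0 * X 1 : MvPolynomial (Fin 2) ℂ) ∈ M := Submodule.subset_span (by simp [hs])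
  have maa : (X 0 ^ 2 : MvPolynomial (Fin 2) ℂ) ∈ M := Submodule.subset_span (by simp [hs])
  have hEM : ∀ b ∈ E, b ∈ M := fun b hb => by simpa using hmul b hb 1 m1
  have mbb : (X 1 ^ 2 : MvPolynomial (Fin 2) ℂ) ∈ M := by
    convert sub_mem (add_mem (hEM _ g1) mab) maa using 1; ring
  have maaa : (X 0 ^ 3 : MvPolynomial (Fin 2) ℂ) ∈ M := by
    convert add_mem (hmul _ g1 _ ma) (hEM _ g3) using 1; ring
  have mbbb : (X 1 ^ 3 : MvPolynomial (Fin 2) ℂ) ∈ M := by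
    convert sub_mem (hmul _ g1 _ mb) (hEM _ g3) using 1; ring
  have maab : (X 0 ^ 2 * X 1 : MvPolynomial (Fin 2) ℂ) ∈ M := by
    convert sub_mem (sub_mem maaa mbbb) (hEM _ g4) using 1; ring
  have mabb : (X 0 * X 1 ^ 2 : MvPolynomial (Fin 2) ℂ) ∈ M := by
    convert sub_mem maab (hEM _ g3) using 1; ring
  refine mul_mem_of_span E s m1 ?_ _ ?_ p
  · intro i m hm
    simp only [hs, Set.mem_insert_iff, Set.mem_singleton_iff] at hm
    fin_cases i <;> simp only [Fin.zero_eta, Fin.mk_one]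
    · rcases hm with rfl | rfl | rfl | rfl | rfl
      · simpa using ma
      · rw [← pow_two]; exact maa
      · exact mab
      · convert maab using 1; ring
      · rw [← pow_succ']; exact maaa
    · rcases hm with rfl | rfl | rfl | rfl | rfl
      · simpa using mb
      · rw [mul_comm]; exact mab
      · rw [← pow_two]; exact mbb
      · convert mabb using 1; ring
      · rw [mul_comm]; exact maab
  · intro m hm
    simp only [hs, Set.mem_insert_iff, Set.mem_singleton_iff] at hm
    rcases hm with rfl | rfl | rfl | rfl | rfl
    · simpa using g3
    · exact g7
    · exact g8
    · exact g11
    · exact g12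

/-- A polynomial in two variables vanishing on the three lines `a = 0`, `b = 0`, `a = b` is
divisible by `ab(a - b)`. -/
lemma dvd_of_lines (p : MvPolynomial (Fin 2) ℂ) (h0 : ∀ t : ℂ, eval ![0, t] p = 0)
    (h1 : ∀ t : ℂ, eval ![t, 0] p = 0) (h2 : ∀ t : ℂ, eval ![t, t] p = 0) :
    X 0 * X 1 * (X 0 - X 1) ∣ p := by
  have key : ∀ (e : Fin 2 → MvPolynomial (Fin 2) ℂ) (v w : Fin 2 → ℂ) (q : MvPolynomial (Fin 2) ℂ),
      (∀ i, eval v (e i) = w i) → eval v (aeval e q) = eval w q := by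
    intro e v w q h
    have : ((aeval v : _ →ₐ[ℂ] ℂ).comp (aeval e)) = aeval w := by
      apply MvPolynomial.algHom_ext
      intro i
      simpa [aeval_eq_eval] using h i
    simpa [aeval_eq_eval] using congrArg (fun k => k q) this
  have d0 := dvd_sub_aeval (X 0) ![0, X 1] (by intro i; fin_cases i <;> simp) p
  have z0 : aeval (![0, X 1] : Fin 2 → MvPolynomial (Fin 2) ℂ) p = 0 := by
    apply MvPolynomial.funext
    intro v
    rw [key _ v ![0, v 1] p (by intro i; fin_cases i <;> simp), h0, map_zero]
  rw [z0, sub_zero] at d0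
  obtain ⟨q, rfl⟩ := d0
  have d1 := dvd_sub_aeval (X 1) ![X 0, 0] (by intro i; fin_cases i <;> simp) q
  have z1 : aeval (![X 0, 0] : Fin 2 → MvPolynomial (Fin 2) ℂ) (X 0 * q) = 0 := by
    apply MvPolynomial.funext
    intro v
    rw [key _ v ![v 0, 0] _ (by intro i; fin_cases i <;> simp), h1, map_zero]
  rw [map_mul, aeval_X] at z1
  rw [(mul_eq_zero.mp z1).resolve_left (X_ne_zero 0), sub_zero] at d1
  obtain ⟨r, rfl⟩ := d1
  have d2 := dvd_sub_aeval (X 0 - X 1) ![X 0, X 0]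
    (by intro i; fin_cases i <;> simp; exact ⟨-1, by ring⟩) r
  have z2 : aeval (![X 0, X 0] : Fin 2 → MvPolynomial (Fin 2) ℂ) (X 0 * (X 1 * r)) = 0 := by
    apply MvPolynomial.funext
    intro v
    rw [key _ v ![v 0, v 0] _ (by intro i; fin_cases i <;> simp), h2, map_zero]
  rw [map_mul, map_mul, aeval_X, aeval_X] at z2
  have z3 := (mul_eq_zero.mp ((mul_eq_zero.mp z2).resolve_left (X_ne_zero 0))).resolve_left
    (X_ne_zero 0)
  rw [z3, sub_zero] at d2
  rw [mul_assoc]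
  exact mul_dvd_mul_left _ (mul_dvd_mul_left _ d2)

/-- The linear coefficient of the restriction of `p` to a parametrised line through the origin is
linear in the direction `(s, t)`. -/
lemma exists_linear_part (p : MvPolynomial (Fin 2) ℂ) : ∃ c α β : ℂ, ∀ s t : ℂ,
    (aeval ![Polynomial.C s * Polynomial.X, Polynomial.C t * Polynomial.X] p).coeff 0 = c ∧
    (aeval ![Polynomial.C s * Polynomial.X, Polynomial.C t * Polynomial.X] p).coeff 1
      = s * α + t * β := by
  induction p using MvPolynomial.induction_on with
  | C c =>
    refine ⟨c, 0, 0, fun s t => ?_⟩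
    simp [Polynomial.coeff_C]
  | add p q hp hq =>
    obtain ⟨c, α, β, h⟩ := hp
    obtain ⟨c', α', β', h'⟩ := hq
    refine ⟨c + c', α + α', β + β', fun s t => ?_⟩
    rw [map_add, Polynomial.coeff_add, Polynomial.coeff_add, (h s t).1, (h s t).2, (h' s t).1,
      (h' s t).2]
    exact ⟨rfl, by ring⟩
  | mul_X p i hp =>
    obtain ⟨c, α, β, h⟩ := hp
    fin_cases i
    · refine ⟨0, c, 0, fun s t => ?_⟩
      have e : ∀ q : Polynomial ℂ, q * (Polynomial.C s * Polynomial.X)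
          = Polynomial.C s * q * Polynomial.X := fun q => by ring
      simp [e, (h s t).1, -mul_eq_zero]
    · refine ⟨0, 0, c, fun s t => ?_⟩
      have e : ∀ q : Polynomial ℂ, q * (Polynomial.C t * Polynomial.X)
          = Polynomial.C t * q * Polynomial.X := fun q => by ring
      simp [e, (h s t).1, -mul_eq_zero]

/-- The cuspidal ring `ℂ[t², t³]` consists of the polynomials without linear term. -/
lemma mem_of_coeff_one (K : Subalgebra ℂ (Polynomial ℂ)) (h2 : Polynomial.X ^ 2 ∈ K)
    (h3 : Polynomial.X ^ 3 ∈ K) (q : Polynomial ℂ) (hq : q.coeff 1 = 0) : q ∈ K := by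
  have hpow : ∀ n : ℕ, (Polynomial.X ^ (n + 2) : Polynomial ℂ) ∈ K := by
    intro n
    induction n using Nat.twoStepInduction with
    | zero => exact h2
    | one => exact h3
    | more n h _ => rw [pow_add]; exact mul_mem h h2
  rw [q.as_sum_support_C_mul_X_pow]
  refine sum_mem fun i hi => mul_mem (K.algebraMap_mem _) ?_
  match i, hi with
  | 0, _ => simp
  | 1, hi => exact absurd hq (Polynomial.mem_support_iff.mp hi)
  | n + 2, _ => exact hpow n

/-! ### The preimage of `R` -/

/-- A subalgebra containing `f` and the thirteen generators, and mapped into `R` by the residue map,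
is all of the preimage of `R`. -/
lemma mem_of_resPhi_mem (B : Subalgebra ℂ (MvPolynomial (Fin 4) ℂ)) (hB : canGens ⊆ (B : Set (MvPolynomial (Fin 4) ℂ)))
    (hfB : ∀ γ, fDP * γ ∈ B) (hf : resPhi fDP = 0)
    (hBR : ∀ g ∈ B, resPhi g ∈ Algebra.adjoin ℂ ({uInv, vInv} :
      Set (MvPolynomial (Fin 2) ℂ × MvPolynomial (Fin 2) ℂ)))
    (g : MvPolynomial (Fin 4) ℂ)
    (hg : resPhi g ∈ Algebra.adjoin ℂ ({uInv, vInv} :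
      Set (MvPolynomial (Fin 2) ℂ × MvPolynomial (Fin 2) ℂ))) : g ∈ B := by
  -- The restrictions of `p = (resPhi g).1` to the three lines `(0,t)`, `(-t,0)`, `(t,t)` agree.
  have hline : ∀ g : MvPolynomial (Fin 4) ℂ,
      resPhi g ∈ Algebra.adjoin ℂ ({uInv, vInv} :
        Set (MvPolynomial (Fin 2) ℂ × MvPolynomial (Fin 2) ℂ)) → ∀ t : ℂ,
      eval ![-t, 0] (resPhi g).1 = eval ![0, t] (resPhi g).1 ∧
      eval ![t, t] (resPhi g).1 = eval ![0, t] (resPhi g).1 := by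
    intro g hg t
    constructor
    · simp [eval_resPhi_fst]
    · have h1 := eval_of_mem_adjoin _ hg t 0
      have h2 := eval_of_mem_adjoin _ hg 0 (-t)
      rw [eval_resPhi_snd] at h1 h2
      simp at h1 h2
      rw [← h1, ← h2]
  have hevl : ∀ (p : MvPolynomial (Fin 2) ℂ) (s t r : ℂ),
      (aeval ![Polynomial.C s * Polynomial.X, Polynomial.C t * Polynomial.X] p).eval r
        = eval ![s * r, t * r] p := by
    intro p s t r
    have : (Polynomial.aeval r).comp
        (aeval ![Polynomial.C s * Polynomial.X, Polynomial.C t * Polynomial.X])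
        = (aeval ![s * r, t * r] : MvPolynomial (Fin 2) ℂ →ₐ[ℂ] ℂ) := by
      apply MvPolynomial.algHom_ext
      intro i
      fin_cases i <;> simp
    simpa [aeval_eq_eval, Polynomial.coe_aeval_eq_eval] using congrArg (fun k => k p) this
  -- Their common value has no linear term, so it is attained by an element of `B`.
  have hcoeff : (aeval ![Polynomial.C 0 * Polynomial.X, Polynomial.C 1 * Polynomial.X]
      (resPhi g).1 : Polynomial ℂ).coeff 1 = 0 := by
    obtain ⟨c, α, β, hl⟩ := exists_linear_part (resPhi g).1
    have e1 : (aeval ![Polynomial.C (-1) * Polynomial.X, Polynomial.C 0 * Polynomial.X]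
        (resPhi g).1 : Polynomial ℂ) =
        aeval ![Polynomial.C 0 * Polynomial.X, Polynomial.C 1 * Polynomial.X] (resPhi g).1 := by
      apply Polynomial.funext
      intro r
      rw [hevl, hevl]
      simpa using (hline g hg r).1
    have e2 : (aeval ![Polynomial.C 1 * Polynomial.X, Polynomial.C 1 * Polynomial.X]
        (resPhi g).1 : Polynomial ℂ) =
        aeval ![Polynomial.C 0 * Polynomial.X, Polynomial.C 1 * Polynomial.X] (resPhi g).1 := by
      apply Polynomial.funext
      intro r
      rw [hevl, hevl]
      simpa using (hline g hg r).2
    have c1 := congrArg (fun q => Polynomial.coeff q 1) e1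
    have c2 := congrArg (fun q => Polynomial.coeff q 1) e2
    simp only [(hl _ _).2] at c1 c2
    rw [(hl 0 1).2]
    linear_combination -c1 - c2
  set L : MvPolynomial (Fin 2) ℂ →ₐ[ℂ] Polynomial ℂ :=
    aeval ![Polynomial.C 0 * Polynomial.X, Polynomial.C 1 * Polynomial.X] with hL
  have hK := mem_of_coeff_one (B.map (L.comp resFst))
    ⟨(X 0) ^ 2 + (X 1) ^ 2 - X 2, hB (by simp [canGens]), by simp [hL, resFst, resPhi]⟩
    (by
      rw [← neg_mem_iff]
      exact ⟨(X 0) ^ 3 - (X 1) ^ 3 + 3 * (X 1 * X 2) + X 3, hB (by simp [canGens]),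
        by simp [hL, resFst, resPhi]⟩) _ hcoeff
  obtain ⟨β, hβ, hβg⟩ := hK
  have hg' : resPhi (g - β) ∈ Algebra.adjoin ℂ ({uInv, vInv} :
      Set (MvPolynomial (Fin 2) ℂ × MvPolynomial (Fin 2) ℂ)) := by
    rw [map_sub]; exact sub_mem hg (hBR β hβ)
  have h0 : ∀ t : ℂ, eval ![0, t] (resPhi (g - β)).1 = 0 := by
    intro t
    have := congrArg (Polynomial.eval t) hβg
    simp only [RingHom.coe_coe, AlgHom.comp_apply, hL, resFst_apply, hevl] at this
    simp only [zero_mul, one_mul] at this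
    rw [map_sub, Prod.fst_sub, map_sub, this, sub_self]
  obtain ⟨q, hq⟩ := dvd_of_lines (resPhi (g - β)).1 h0
    (fun t => by
      have := (hline _ hg' (-t)).1
      rw [neg_neg, h0] at this
      exact this)
    (fun t => by rw [(hline _ hg' t).2, h0])
  obtain ⟨β', hβ', hβq⟩ := mul_mem_map_resFst B hB q
  have hβq' : (resPhi β').1 = X 0 * X 1 * (X 0 - X 1) * q := hβq
  have hker : resPhi (g - β - β') = 0 := by
    have h1 : (resPhi (g - β - β')).1 = 0 := by
      rw [map_sub, Prod.fst_sub, hq, hβq', sub_self]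
    have h2 : resPhi (g - β - β') ∈ Algebra.adjoin ℂ ({uInv, vInv} :
        Set (MvPolynomial (Fin 2) ℂ × MvPolynomial (Fin 2) ℂ)) := by
      rw [map_sub]; exact sub_mem hg' (hBR β' hβ')
    refine Prod.ext h1 ?_
    rw [eq_of_mem_adjoin _ h2, h1, map_zero, Prod.snd_zero]
  obtain ⟨δ, γ, hδ⟩ := exists_of_resPhi_eq_zero hf _ hker
  have : g = X 0 * X 1 * δ + fDP * γ + β' + β := by rw [← hδ]; ring
  rw [this]
  exact add_mem (add_mem (add_mem (X0X1_mul_mem B hB δ) (hfB γ)) hβ') hβ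

/-- Given that `φ` vanishes on the ideal `(f)` (so that it induces
`φ̄ : ℂ[x₁,x₂,y,z]/(f) → ℂ[a₁,b₁] × ℂ[a₂,b₂]`), the preimage `φ̄⁻¹(R)` of the
subalgebra `R = ℂ[u, v]` is exactly the `ℂ`-subalgebra of `ℂ[x₁,x₂,y,z]/(f)`
generated by the residue classes of the thirteen canonical-ring generators. -/
theorem stmt_6 (h : ∀ a ∈ Ideal.span ({fDP} : Set (MvPolynomial (Fin 4) ℂ)), resPhi a = 0) :
    Subalgebra.comap (Ideal.Quotient.liftₐ (Ideal.span {fDP}) resPhi h)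
        (Algebra.adjoin ℂ ({uInv, vInv} :
          Set (MvPolynomial (Fin 2) ℂ × MvPolynomial (Fin 2) ℂ)))
      = Algebra.adjoin ℂ
          ((Ideal.Quotient.mkₐ ℂ (Ideal.span {fDP})) '' canGens) := by
  have hf : resPhi fDP = 0 := h _ (Ideal.subset_span rfl)
  have hlift : ∀ g, Ideal.Quotient.liftₐ (Ideal.span {fDP}) resPhi h
      (Ideal.Quotient.mkₐ ℂ (Ideal.span {fDP}) g) = resPhi g := fun g => rfl
  have hle : Algebra.adjoin ℂ ((Ideal.Quotient.mkₐ ℂ (Ideal.span {fDP})) '' canGens) ≤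
      Subalgebra.comap (Ideal.Quotient.liftₐ (Ideal.span {fDP}) resPhi h)
        (Algebra.adjoin ℂ ({uInv, vInv} :
          Set (MvPolynomial (Fin 2) ℂ × MvPolynomial (Fin 2) ℂ))) := by
    rw [Algebra.adjoin_le_iff]
    rintro _ ⟨g, hg, rfl⟩
    exact resPhi_mem_of_mem_canGens g hg
  refine le_antisymm ?_ hle
  intro x hx
  obtain ⟨g, rfl⟩ := Ideal.Quotient.mkₐ_surjective ℂ (Ideal.span {fDP}) x
  refine mem_of_resPhi_mem
    ((Algebra.adjoin ℂ ((Ideal.Quotient.mkₐ ℂ (Ideal.span {fDP})) '' canGens)).comap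
      (Ideal.Quotient.mkₐ ℂ (Ideal.span {fDP}))) ?_ ?_ hf ?_ g hx
  · intro m hm
    exact Algebra.subset_adjoin ⟨m, hm, rfl⟩
  · intro γ
    have : Ideal.Quotient.mkₐ ℂ (Ideal.span {fDP}) (fDP * γ) = 0 :=
      Ideal.Quotient.eq_zero_iff_mem.mpr
        (Ideal.mul_mem_right _ _ (Ideal.subset_span rfl))
    rw [Subalgebra.mem_comap, this]
    exact zero_mem _
  · intro m hm
    exact hle hm
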